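/- Let (W, S) be a Coxeter system with length function ℓ, Bruhat order ≤, and absolute length ℓᵃ (where ℓᵃ(w) is the minimal number k such that w is a product of k reflections, i.e. of k conjugates of elements of S). If w and σ are involutions in W with w ≤ σ in the Bruhat order and ℓ(w) + ℓᵃ(w) = ℓ(σ) + ℓᵃ(σ), then w = σ. -/

import Mathlib

/-!
Put `ρ(w) = (ℓ(w) + ℓᵃ(w)) / 2`. The theorem holds because `ρ` is strictly increasing for the Bruhat
order on involutions. For a simple reflection `s`, let `τₛ` be the permutation of the involutions
that sends `x` to `x s` if `s` commutes with `x`, and to `s x s` otherwise. Then `τₛ` is its own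
inverse, exchanges the involutions with and without descent `s`, and raises `ρ` by one on the
latter. Take `w < σ`, let `s` be a descent of `σ`, and apply the lifting property of the Bruhat
order on both sides. If `s` is not a descent of `w`, then `w ≤ τₛ(σ)`, so `ρ(w) ≤ ρ(σ) - 1`;
otherwise `τₛ(w) < τₛ(σ)`, and induction on `σ` applies.

The lifting property comes from the geometric representation `V`, where the reflection `t` with
positive root `β` satisfies `ℓ(u) < ℓ(u t)` if and only if `u β` is positive. The effect of `τₛ` on
`ℓᵃ` is read off from `V` too. The space `(1 - w) V` has dimension at most `ℓᵃ(w)`, as a reflection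
moves only a line, and by induction equality holds for involutions: if `s` commutes with `x` and is
not a descent of `x`, then `x` fixes `αₛ`, so `(1 - x s) V` contains `αₛ` in addition to
`(1 - x) V`.
-/

/-!
Statement 1. Let `(W, S)` be a Coxeter system with length function `ℓ`, Bruhat order `≤`, and
absolute length `ℓᵃ` (minimal number of reflections needed to write an element as a product of
reflections). If `w` and `σ` are involutions in `W` with `w ≤ σ` in the Bruhat order and
`ℓ(w) + ℓᵃ(w) = ℓ(σ) + ℓᵃ(σ)`, then `w = σ`.
-/

noncomputable section

namespace CoxeterSystem

variable {B W : Type*} [Group W] {M : CoxeterMatrix B} (cs : CoxeterSystem M W)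

/-- The absolute length of `w`: the minimal number of reflections (conjugates of simple
reflections) needed to express `w` as a product of reflections. -/
def absLength (w : W) : ℕ :=
  sInf {n : ℕ | ∃ l : List W, l.length = n ∧ (∀ t ∈ l, cs.IsReflection t) ∧ l.prod = w}

/-- The Bruhat order on `W`: the reflexive-transitive closure of the relation
`u < u·t` for `t` a reflection with `ℓ(u) < ℓ(u·t)`. -/
def BruhatLE : W → W → Prop :=
  Relation.ReflTransGen fun u v =>
    (∃ t, cs.IsReflection t ∧ v = u * t) ∧ cs.length u < cs.length v

local notation "s" => cs.simple
local notation "ℓ" => cs.length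

/-! ### Products of two reflections -/

section Chebyshev

open Polynomial.Chebyshev

lemma chebyshevS_eval_eq_zero {n : ℤ} {φ : ℝ} (hφ : Real.sin φ ≠ 0) (h : (n + 1) * φ = Real.pi) :
    (S ℝ n).eval (2 * Real.cos φ) = 0 := by
  have hS := S_two_mul_real_cos φ n
  rw [h, Real.sin_pi] at hS
  exact (mul_eq_zero.mp hS).resolve_right hφ

lemma chebyshevS_eval_add_eq_zero {n : ℤ} {φ : ℝ} (hφ : Real.sin φ ≠ 0)
    (h : (2 * n + 1) * φ = 2 * Real.pi) :
    (S ℝ n).eval (2 * Real.cos φ) + (S ℝ (n - 1)).eval (2 * Real.cos φ) = 0 := by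
  have hS := S_two_mul_real_cos φ n
  have hS' := S_two_mul_real_cos φ (n - 1)
  have hangle : (n + 1) * φ = 2 * Real.pi - ((n - 1 : ℤ) + 1) * φ := by
    push_cast
    linear_combination h
  rw [hangle, Real.sin_two_pi_sub] at hS
  refine (mul_eq_zero.mp ?_).resolve_right hφ
  linear_combination hS + hS'

lemma chebyshevS_eval_two_mul_cos_pi_div_nonneg {m k : ℕ} (hm : m ≠ 1) (hk : m = 0 ∨ k ≤ m) :
    0 ≤ (S ℝ (k - 1)).eval (2 * Real.cos (Real.pi / m)) := by
  rcases Nat.eq_zero_or_pos m with rfl | hpos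
  · simp [S_eval_two]
  have hm0 : (0 : ℝ) < m := by exact_mod_cast hpos
  have hm1 : (1 : ℝ) < m := by exact_mod_cast (by omega : 1 < m)
  have hkm : (k : ℝ) ≤ m := by exact_mod_cast hk.resolve_left hpos.ne'
  have hsin : 0 < Real.sin (Real.pi / m) :=
    Real.sin_pos_of_pos_of_lt_pi (by positivity) (div_lt_self Real.pi_pos hm1)
  have hsin_mul : 0 ≤ Real.sin (k * (Real.pi / m)) := by
    refine Real.sin_nonneg_of_nonneg_of_le_pi (by positivity) ?_
    rw [mul_div_left_comm]
    exact mul_le_of_le_one_right Real.pi_pos.le ((div_le_one hm0).mpr hkm)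
  have hS := S_two_mul_real_cos (Real.pi / m) (k - 1)
  push_cast at hS
  rw [sub_add_cancel] at hS
  exact nonneg_of_mul_nonneg_left (hS ▸ hsin_mul) hsin

variable {V : Type*} [AddCommGroup V] [Module ℝ V] {x y : V} {f g : Module.Dual ℝ V}

lemma reflection_mul_reflection_sq_eq_one (hf : f x = 2) (hg : g y = 2) (hfy : f y = 0)
    (hgx : g x = 0) : (Module.reflection hf * Module.reflection hg) ^ 2 = 1 := by
  ext1 z
  simp only [pow_two, LinearEquiv.mul_apply, Module.reflection_apply, map_sub, map_smul, hf, hg,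
    hfy, hgx, LinearEquiv.coe_one, id]
  module

/-- The product of the two reflections is a rotation by `2π / m` in the plane of `x` and `y`. -/
lemma reflection_mul_reflection_pow_eq_one (hf : f x = 2) (hg : g y = 2) {m : ℕ} (hm : 3 ≤ m)
    (hfg : f y * g x = 4 * Real.cos (Real.pi / m) ^ 2) :
    (Module.reflection hf * Module.reflection hg) ^ m = 1 := by
  set φ : ℝ := 2 * (Real.pi / m) with hφ
  have hm3 : (3 : ℝ) ≤ m := by exact_mod_cast hm
  have hmφ : m * φ = 2 * Real.pi := by rw [hφ]; field_simp
  have hφ_pos : 0 < φ := by positivity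
  have hsin : Real.sin φ ≠ 0 :=
    (Real.sin_pos_of_pos_of_lt_pi hφ_pos (by nlinarith)).ne'
  have htrace : 2 * Real.cos φ = f y * g x - 2 := by
    rw [hφ, Real.cos_two_mul, hfg]
    ring
  ext1 z
  rw [Module.reflection_mul_reflection_pow_apply hf hg m z _ htrace]
  rcases Nat.even_or_odd' m with ⟨k, rfl | rfl⟩
  · have hS : (S ℝ (k - 1)).eval (2 * Real.cos φ) = 0 := by
      refine chebyshevS_eval_eq_zero hsin ?_
      push_cast at hmφ ⊢
      linear_combination hmφ / 2
    rw [show ((2 * k : ℕ) - 2 : ℤ) / 2 = k - 1 by omega,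
      show ((2 * k : ℕ) - 1 : ℤ) / 2 = k - 1 by omega, hS]
    simp
  · have hS : (S ℝ k).eval (2 * Real.cos φ) + (S ℝ (k - 1)).eval (2 * Real.cos φ) = 0 :=
      chebyshevS_eval_add_eq_zero hsin (by exact_mod_cast hmφ)
    rw [show ((2 * k + 1 : ℕ) - 1 : ℤ) / 2 = k by omega,
      show ((2 * k + 1 : ℕ) - 3 : ℤ) / 2 = k - 1 by omega,
      show ((2 * k + 1 : ℕ) : ℤ) / 2 = k by omega,
      show ((2 * k + 1 : ℕ) - 2 : ℤ) / 2 = k - 1 by omega, hS]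
    simp

end Chebyshev

/-! ### The geometric representation -/

/-- The simple root `αᵢ`, a basis vector of the geometric representation. -/
def simpleRoot (i : B) : B →₀ ℝ := Finsupp.single i 1

/-- Twice the canonical bilinear form of the geometric representation, so that roots have square
`2`. If `M i j = 0` (no relation), the convention `π / 0 = 0` gives the customary value `-2`. -/
def rootForm (M : CoxeterMatrix B) : LinearMap.BilinForm ℝ (B →₀ ℝ) :=
  Finsupp.linearCombination ℝ fun i =>
    Finsupp.linearCombination ℝ fun j => -(2 * Real.cos (Real.pi / M i j))

lemma simpleRoot_nonneg (i : B) : 0 ≤ simpleRoot i :=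
  Finsupp.single_nonneg.mpr zero_le_one

lemma rootForm_simpleRoot_simpleRoot (M : CoxeterMatrix B) (i j : B) :
    rootForm M (simpleRoot i) (simpleRoot j) = -(2 * Real.cos (Real.pi / M i j)) := by
  simp [rootForm, simpleRoot]

lemma rootForm_simpleRoot_self (M : CoxeterMatrix B) (i : B) :
    rootForm M (simpleRoot i) (simpleRoot i) = 2 := by
  simp [rootForm_simpleRoot_simpleRoot]

lemma rootForm_comm (M : CoxeterMatrix B) (x y : B →₀ ℝ) : rootForm M x y = rootForm M y x := by
  have hflip : rootForm M = (rootForm M).flip := by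
    ext i j
    simp [rootForm, M.symmetric i j]
  exact LinearMap.congr_fun (LinearMap.congr_fun hflip x) y

/-- The action of the `i`-th simple reflection on the geometric representation. -/
def simpleReflection (M : CoxeterMatrix B) (i : B) : (B →₀ ℝ) ≃ₗ[ℝ] (B →₀ ℝ) :=
  Module.reflection (rootForm_simpleRoot_self M i)

lemma isLiftable_simpleReflection (M : CoxeterMatrix B) : M.IsLiftable (simpleReflection M) := by
  intro i j
  have hij := rootForm_simpleRoot_simpleRoot M i j
  have hji := rootForm_simpleRoot_simpleRoot M j i
  rw [M.symmetric j i] at hji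
  by_cases heq : i = j
  · subst heq
    rw [M.diagonal, pow_one]
    exact LinearEquiv.ext (Module.involutive_reflection (rootForm_simpleRoot_self M i))
  have hm1 : M i j ≠ 1 := M.off_diagonal i j heq
  obtain hm | hm | hm : M i j = 0 ∨ M i j = 2 ∨ 3 ≤ M i j := by omega
  · rw [hm, pow_zero]
  · simp only [hm, Nat.cast_ofNat, Real.cos_pi_div_two, mul_zero, neg_zero] at hij hji
    rw [hm]
    exact reflection_mul_reflection_sq_eq_one _ _ hij hji
  · refine reflection_mul_reflection_pow_eq_one _ _ hm ?_
    rw [hij, hji]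
    ring

/-- The geometric representation of `W` on the real vector space with basis the simple roots. -/
def geomRep : W →* ((B →₀ ℝ) ≃ₗ[ℝ] (B →₀ ℝ)) :=
  cs.lift ⟨simpleReflection M, isLiftable_simpleReflection M⟩

lemma geomRep_mul_apply (u v : W) (x : B →₀ ℝ) :
    cs.geomRep (u * v) x = cs.geomRep u (cs.geomRep v x) := by
  rw [map_mul, LinearEquiv.mul_apply]

lemma geomRep_apply_inv_apply (u : W) (x : B →₀ ℝ) :
    cs.geomRep u (cs.geomRep u⁻¹ x) = x := by
  rw [← geomRep_mul_apply, mul_inv_cancel, map_one, LinearEquiv.coe_one, id]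

lemma geomRep_simple_apply (i : B) (x : B →₀ ℝ) :
    cs.geomRep (s i) x = x - rootForm M (simpleRoot i) x • simpleRoot i := by
  rw [geomRep, lift_apply_simple]
  exact Module.reflection_apply _ _

lemma geomRep_simple_simpleRoot (i : B) :
    cs.geomRep (s i) (simpleRoot i) = -simpleRoot i := by
  rw [geomRep_simple_apply, rootForm_simpleRoot_self]
  module

lemma rootForm_geomRep (w : W) (x y : B →₀ ℝ) :
    rootForm M (cs.geomRep w x) (cs.geomRep w y) = rootForm M x y := by
  induction w using cs.simple_induction_left generalizing x y with
  | one => simp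
  | mul_simple_left w i ih =>
    rw [geomRep_mul_apply, geomRep_mul_apply, ← ih x y, geomRep_simple_apply, geomRep_simple_apply]
    simp only [map_sub, map_smul, LinearMap.sub_apply, LinearMap.smul_apply, smul_eq_mul,
      rootForm_simpleRoot_self, rootForm_comm M (cs.geomRep w x) (simpleRoot i)]
    ring

lemma rootForm_root_self (u : W) (i : B) :
    rootForm M (cs.geomRep u (simpleRoot i)) (cs.geomRep u (simpleRoot i)) = 2 := by
  rw [rootForm_geomRep, rootForm_simpleRoot_self]

lemma geomRep_conj_simple_apply (u : W) (i : B) (x : B →₀ ℝ) :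
    cs.geomRep (u * s i * u⁻¹) x =
      x - rootForm M (cs.geomRep u (simpleRoot i)) x • cs.geomRep u (simpleRoot i) := by
  rw [geomRep_mul_apply, geomRep_mul_apply, geomRep_simple_apply, map_sub, map_smul,
    geomRep_apply_inv_apply, ← cs.rootForm_geomRep u, geomRep_apply_inv_apply]

/-! ### Descents and the sign of roots -/

open Polynomial.Chebyshev in
lemma geomRep_alternatingWord_simpleRoot (i j : B) (k : ℕ) :
    cs.geomRep (cs.wordProd (alternatingWord i j k)) (simpleRoot i) =
      if Even k then
        (S ℝ k).eval (2 * Real.cos (Real.pi / M i j)) • simpleRoot i +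
          (S ℝ (k - 1)).eval (2 * Real.cos (Real.pi / M i j)) • simpleRoot j
      else
        (S ℝ (k - 1)).eval (2 * Real.cos (Real.pi / M i j)) • simpleRoot i +
          (S ℝ k).eval (2 * Real.cos (Real.pi / M i j)) • simpleRoot j := by
  have hij := rootForm_simpleRoot_simpleRoot M i j
  have hji := rootForm_simpleRoot_simpleRoot M j i
  rw [M.symmetric j i] at hji
  induction k with
  | zero => simp [alternatingWord]
  | succ k ih =>
    have hrec : (S ℝ (k + 1)).eval (2 * Real.cos (Real.pi / M i j)) =
        2 * Real.cos (Real.pi / M i j) * (S ℝ k).eval (2 * Real.cos (Real.pi / M i j)) -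
          (S ℝ (k - 1)).eval (2 * Real.cos (Real.pi / M i j)) := by
      simp [S_add_one]
    rw [alternatingWord_succ', wordProd_cons, geomRep_mul_apply, ih, Nat.cast_succ,
      add_sub_cancel_right, hrec]
    by_cases hk : Even k
    · simp only [hk, if_true, Nat.even_add_one, not_true, if_false, geomRep_simple_apply, map_add,
        map_smul, hji, rootForm_simpleRoot_self]
      module
    · simp only [hk, if_false, Nat.even_add_one, not_false_eq_true, if_true, geomRep_simple_apply,
        map_add, map_smul, hij, rootForm_simpleRoot_self]
      module

/-- The factor `v` is the minimal representative of the coset of `w` modulo the dihedral subgroup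
generated by `sᵢ` and `sⱼ`. -/
lemma exists_mul_alternatingWord_eq {w : W} {i : B} (j : B) (hi : ¬ cs.IsRightDescent w i) :
    ∃ (v : W) (k : ℕ), w = v * cs.wordProd (alternatingWord i j k) ∧ ℓ w = ℓ v + k ∧
      ¬ cs.IsRightDescent v i ∧ ¬ cs.IsRightDescent v j := by
  induction hn : ℓ w using Nat.strong_induction_on generalizing w i j with
  | _ n ih =>
  subst hn
  by_cases hj : cs.IsRightDescent w j
  · have hlen := cs.isRightDescent_iff.mp hj
    obtain ⟨v, k, hv, hvk, hvj, hvi⟩ :=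
      ih _ hj i (cs.isRightDescent_iff_not_isRightDescent_mul.mp hj) rfl
    refine ⟨v, k + 1, ?_, by omega, hvi, hvj⟩
    rw [alternatingWord_succ, wordProd_concat, ← mul_assoc, ← hv, simple_mul_simple_cancel_right]
  · exact ⟨w, 0, by simp [alternatingWord], rfl, hi, hj⟩

lemma alternatingWord_length_lt_of_not_isRightDescent {v : W} {i j : B} {k : ℕ}
    (hlen : ℓ (v * cs.wordProd (alternatingWord i j k)) = ℓ v + k)
    (hi : ¬ cs.IsRightDescent (v * cs.wordProd (alternatingWord i j k)) i) :
    M i j = 0 ∨ k + 1 ≤ M i j := by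
  have hred : cs.IsReduced (alternatingWord j i (k + 1)) := by
    have hmul := cs.length_mul_le v (cs.wordProd (alternatingWord j i (k + 1)))
    rw [alternatingWord_succ, wordProd_concat, ← mul_assoc, cs.not_isRightDescent_iff.mp hi, hlen,
      ← wordProd_concat, ← alternatingWord_succ] at hmul
    have hle := cs.length_wordProd_le (alternatingWord j i (k + 1))
    rw [length_alternatingWord] at hle
    rw [IsReduced, length_alternatingWord]
    omega
  by_contra! hcon
  refine cs.not_isReduced_alternatingWord j i ?_ ?_ hred
  · rw [M.symmetric]
    exact hcon.1
  · rw [M.symmetric]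
    exact hcon.2

theorem geomRep_simpleRoot_nonneg {w : W} {i : B} (hi : ¬ cs.IsRightDescent w i) :
    0 ≤ cs.geomRep w (simpleRoot i) := by
  induction hn : ℓ w using Nat.strong_induction_on generalizing w i with
  | _ n ih =>
  subst hn
  by_cases hw : w = 1
  · rw [hw, map_one]
    exact simpleRoot_nonneg i
  obtain ⟨j, hj⟩ := cs.exists_rightDescent_of_ne_one hw
  have hij : i ≠ j := fun h => hi (h ▸ hj)
  obtain ⟨v, k, rfl, hlen, hvi, hvj⟩ := cs.exists_mul_alternatingWord_eq j hi
  have hk : k ≠ 0 := by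
    rintro rfl
    exact hvj (by simpa [alternatingWord] using hj)
  have hvi_nonneg := ih _ (by omega) hvi rfl
  have hvj_nonneg := ih _ (by omega) hvj rfl
  have hkm := cs.alternatingWord_length_lt_of_not_isRightDescent hlen hi
  have hm1 := M.off_diagonal i j hij
  have hS := chebyshevS_eval_two_mul_cos_pi_div_nonneg (k := k) hm1 (by omega)
  have hS' := chebyshevS_eval_two_mul_cos_pi_div_nonneg hm1 hkm
  rw [Nat.cast_succ, add_sub_cancel_right] at hS'
  rw [geomRep_mul_apply, geomRep_alternatingWord_simpleRoot]
  split_ifs <;> rw [map_add, map_smul, map_smul]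
  · exact add_nonneg (smul_nonneg hS' hvi_nonneg) (smul_nonneg hS hvj_nonneg)
  · exact add_nonneg (smul_nonneg hS hvi_nonneg) (smul_nonneg hS' hvj_nonneg)

theorem geomRep_simpleRoot_nonpos {w : W} {i : B} (hi : cs.IsRightDescent w i) :
    cs.geomRep w (simpleRoot i) ≤ 0 := by
  have h := cs.geomRep_simpleRoot_nonneg (cs.isRightDescent_iff_not_isRightDescent_mul.mp hi)
  rwa [geomRep_mul_apply, geomRep_simple_simpleRoot, map_neg, neg_nonneg] at h

lemma root_nonneg_or_nonpos (u : W) (i : B) :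
    0 ≤ cs.geomRep u (simpleRoot i) ∨ cs.geomRep u (simpleRoot i) ≤ 0 := by
  by_cases h : cs.IsRightDescent u i
  · exact Or.inr (cs.geomRep_simpleRoot_nonpos h)
  · exact Or.inl (cs.geomRep_simpleRoot_nonneg h)

theorem geomRep_injective : Function.Injective cs.geomRep := by
  rw [injective_iff_map_eq_one]
  intro w hw
  by_contra hne
  obtain ⟨i, hi⟩ := cs.exists_rightDescent_of_ne_one hne
  have hnonpos := cs.geomRep_simpleRoot_nonpos hi
  rw [hw, LinearEquiv.coe_one, id] at hnonpos
  exact Finsupp.single_ne_zero.mpr one_ne_zero (le_antisymm hnonpos (simpleRoot_nonneg i))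

/-! ### Positive roots and reflections -/

/-- `β` is a positive root and `t` is the reflection in it. -/
def IsPosRootOf (t : W) (β : B →₀ ℝ) : Prop :=
  ∃ u i, t = u * s i * u⁻¹ ∧ β = cs.geomRep u (simpleRoot i) ∧ 0 ≤ β

section IsPosRootOf

variable {cs} {t t' : W} {β β' : B →₀ ℝ}

lemma isPosRootOf_simple (i : B) : cs.IsPosRootOf (s i) (simpleRoot i) :=
  ⟨1, i, by simp, by simp, simpleRoot_nonneg i⟩

lemma exists_isPosRootOf (ht : cs.IsReflection t) : ∃ β, cs.IsPosRootOf t β := by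
  obtain ⟨u, i, rfl⟩ := ht
  rcases cs.root_nonneg_or_nonpos u i with h | h
  · exact ⟨_, u, i, rfl, rfl, h⟩
  · refine ⟨_, u * s i, i, by simp [mul_assoc], rfl, ?_⟩
    rwa [geomRep_mul_apply, geomRep_simple_simpleRoot, map_neg, neg_nonneg]

namespace IsPosRootOf

lemma isReflection (h : cs.IsPosRootOf t β) : cs.IsReflection t := by
  obtain ⟨u, i, rfl, -, -⟩ := h
  exact ⟨u, i, rfl⟩

lemma nonneg (h : cs.IsPosRootOf t β) : 0 ≤ β := by
  obtain ⟨_, _, _, _, hβ⟩ := h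
  exact hβ

lemma rootForm_self (h : cs.IsPosRootOf t β) : rootForm M β β = 2 := by
  obtain ⟨u, i, -, rfl, -⟩ := h
  exact cs.rootForm_root_self u i

lemma ne_zero (h : cs.IsPosRootOf t β) : β ≠ 0 := by
  rintro rfl
  simpa using h.rootForm_self

lemma geomRep_apply (h : cs.IsPosRootOf t β) (x : B →₀ ℝ) :
    cs.geomRep t x = x - rootForm M β x • β := by
  obtain ⟨u, i, rfl, rfl, -⟩ := h
  exact cs.geomRep_conj_simple_apply u i x

lemma geomRep_apply_self (h : cs.IsPosRootOf t β) : cs.geomRep t β = -β := by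
  rw [h.geomRep_apply, h.rootForm_self]
  module

lemma eq_of_eq_smul (h : cs.IsPosRootOf t β) (h' : cs.IsPosRootOf t' β') {c : ℝ}
    (hc : β = c • β') : β = β' := by
  have hc_sq : c * c = 1 := by
    have hform := h.rootForm_self
    simp only [hc, map_smul, LinearMap.smul_apply, smul_eq_mul, h'.rootForm_self] at hform
    linarith
  obtain rfl | rfl := mul_self_eq_one_iff.mp hc_sq
  · rw [hc, one_smul]
  · rw [neg_one_smul] at hc
    have hneg : 0 ≤ -β' := hc ▸ h.nonneg
    exact absurd (le_antisymm (neg_nonneg.mp hneg) h'.nonneg) h'.ne_zero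

lemma reflection_eq (h : cs.IsPosRootOf t β) (h' : cs.IsPosRootOf t' β) : t = t' := by
  apply cs.geomRep_injective
  ext1 x
  rw [h.geomRep_apply, h'.geomRep_apply]

lemma root_eq (h : cs.IsPosRootOf t β) (h' : cs.IsPosRootOf t β') : β = β' := by
  refine h.eq_of_eq_smul h' (c := rootForm M β' β / 2) ?_
  have happly := h'.geomRep_apply β
  rw [h.geomRep_apply_self] at happly
  have htwo : rootForm M β' β • β' = (2 : ℝ) • β := by
    rw [two_smul, ← sub_neg_eq_add, happly, sub_sub_cancel]
  rw [div_eq_inv_mul, mul_smul, htwo, inv_smul_smul₀ two_ne_zero]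

lemma conj_simple (h : cs.IsPosRootOf t β) {i : B} (hi : t ≠ s i) :
    cs.IsPosRootOf (s i * t * s i) (cs.geomRep (s i) β) := by
  obtain ⟨u, j, ht, hβ, hpos⟩ := id h
  have hroot : cs.geomRep (s i) β = cs.geomRep (s i * u) (simpleRoot j) := by
    rw [geomRep_mul_apply, hβ]
  refine ⟨s i * u, j, by simp [ht, mul_assoc], hroot, ?_⟩
  rw [hroot]
  refine (cs.root_nonneg_or_nonpos (s i * u) j).resolve_right fun hneg => hi ?_
  -- `sᵢ` changes only the `i`-th coordinate, so the other coordinates of `β` vanish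
  have hsmul : β = β i • simpleRoot i := by
    ext b
    by_cases hb : b = i
    · simp [hb, simpleRoot]
    · have hle : β b ≤ 0 := by
        have hneg_b := hneg b
        rw [← hroot, geomRep_simple_apply] at hneg_b
        simpa [simpleRoot, Ne.symm hb] using hneg_b
      simpa [simpleRoot, Ne.symm hb] using le_antisymm hle (hpos b)
  have hsimple := isPosRootOf_simple (cs := cs) i
  rw [h.eq_of_eq_smul hsimple hsmul] at h
  exact h.reflection_eq hsimple

lemma length_mul_lt (h : cs.IsPosRootOf t β) {u : W} (hu : ¬ 0 ≤ cs.geomRep u β) :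
    ℓ (u * t) < ℓ u := by
  induction hn : ℓ u using Nat.strong_induction_on generalizing u t β with
  | _ n ih =>
  subst hn
  have hu1 : u ≠ 1 := by
    rintro rfl
    exact hu (by simpa using h.nonneg)
  obtain ⟨i, hi⟩ := cs.exists_rightDescent_of_ne_one hu1
  by_cases hti : t = s i
  · rw [hti]
    exact hi
  have hlt : ℓ (u * s i * (s i * t * s i)) < ℓ (u * s i) :=
    ih _ hi (h.conj_simple hti)
      (by rwa [← geomRep_mul_apply, simple_mul_simple_cancel_right]) rfl
  rw [← mul_assoc, ← mul_assoc, simple_mul_simple_cancel_right] at hlt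
  have hlen := cs.isRightDescent_iff.mp hi
  rcases cs.length_mul_simple (u * t) i with h' | h' <;> omega

theorem length_lt_length_mul_iff (h : cs.IsPosRootOf t β) (u : W) :
    ℓ u < ℓ (u * t) ↔ 0 ≤ cs.geomRep u β := by
  refine ⟨fun hlt => by_contra fun hu => (h.length_mul_lt hu).asymm hlt, fun hu => ?_⟩
  have hneg : ¬ 0 ≤ cs.geomRep (u * t) β := by
    rw [geomRep_mul_apply, h.geomRep_apply_self, map_neg, neg_nonneg]
    intro hu'
    exact h.ne_zero ((LinearEquiv.map_eq_zero_iff _).mp (le_antisymm hu' hu))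
  have hlt := h.length_mul_lt hneg
  rwa [mul_assoc, h.isReflection.mul_self, mul_one] at hlt

end IsPosRootOf

theorem length_mul_simple_lt_of_ne (ht : cs.IsReflection t) {i : B} (hti : t ≠ s i) {u : W}
    (hlt : ℓ u < ℓ (u * t)) : ℓ (u * s i) < ℓ (u * t * s i) := by
  obtain ⟨β, hβ⟩ := exists_isPosRootOf ht
  have hpos := (hβ.length_lt_length_mul_iff u).mp hlt
  have hlt' : ℓ (u * s i) < ℓ (u * s i * (s i * t * s i)) := by
    rwa [(hβ.conj_simple hti).length_lt_length_mul_iff, ← geomRep_mul_apply,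
      simple_mul_simple_cancel_right]
  rwa [← mul_assoc, ← mul_assoc, simple_mul_simple_cancel_right] at hlt'

end IsPosRootOf

/-! ### The lifting property of the Bruhat order -/

open Classical in
/-- The shorter of the two elements `w` and `w sᵢ`. -/
def lowerRight (i : B) (w : W) : W := if cs.IsRightDescent w i then w * s i else w

lemma lowerRight_of_isRightDescent {i : B} {w : W} (h : cs.IsRightDescent w i) :
    cs.lowerRight i w = w * s i :=
  if_pos h

lemma lowerRight_of_not_isRightDescent {i : B} {w : W} (h : ¬ cs.IsRightDescent w i) :
    cs.lowerRight i w = w :=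
  if_neg h

lemma lowerRight_mul_simple (i : B) (w : W) :
    cs.lowerRight i (w * s i) = cs.lowerRight i w := by
  by_cases h : cs.IsRightDescent w i
  · rw [lowerRight_of_isRightDescent _ h, lowerRight_of_not_isRightDescent _
      (cs.isRightDescent_iff_not_isRightDescent_mul.mp h)]
  · rw [lowerRight_of_not_isRightDescent _ h, lowerRight_of_isRightDescent _
      (not_not.mp (cs.isRightDescent_iff_not_isRightDescent_mul.not.mp h)),
      simple_mul_simple_cancel_right]

section BruhatLE

variable {cs} {t u v : W} {i : B}

lemma bruhatLE_mul_of_length_lt (ht : cs.IsReflection t) (hlt : ℓ u < ℓ (u * t)) :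
    cs.BruhatLE u (u * t) :=
  .single ⟨⟨t, ht, rfl⟩, hlt⟩

lemma lowerRight_bruhatLE (i : B) (w : W) : cs.BruhatLE (cs.lowerRight i w) w := by
  by_cases h : cs.IsRightDescent w i
  · have hle := bruhatLE_mul_of_length_lt (u := w * s i) (cs.isReflection_simple i)
      (by rwa [simple_mul_simple_cancel_right])
    rwa [simple_mul_simple_cancel_right, ← lowerRight_of_isRightDescent _ h] at hle
  · rw [lowerRight_of_not_isRightDescent _ h]
    exact .refl

lemma lowerRight_bruhatLE_lowerRight_mul (ht : cs.IsReflection t) (hlt : ℓ u < ℓ (u * t)) :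
    cs.BruhatLE (cs.lowerRight i u) (cs.lowerRight i (u * t)) := by
  by_cases hti : t = s i
  · rw [hti, lowerRight_mul_simple]
    exact .refl
  by_cases hdesc : cs.IsRightDescent (u * t) i
  · rw [lowerRight_of_isRightDescent _ hdesc, ← lowerRight_mul_simple]
    have hconj : u * t * s i = u * s i * (s i * t * (s i)⁻¹) := by simp [← mul_assoc]
    have hlt' := length_mul_simple_lt_of_ne ht hti hlt
    rw [hconj] at hlt' ⊢
    exact (lowerRight_bruhatLE i _).trans (bruhatLE_mul_of_length_lt (ht.conj _) hlt')
  · rw [lowerRight_of_not_isRightDescent _ hdesc]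
    exact (lowerRight_bruhatLE i u).trans (bruhatLE_mul_of_length_lt ht hlt)

namespace BruhatLE

lemma eq_one (h : cs.BruhatLE u 1) : u = 1 := by
  cases h with
  | refl => rfl
  | tail _ hstep => simp at hstep

lemma inv (h : cs.BruhatLE u v) : cs.BruhatLE u⁻¹ v⁻¹ := by
  induction h with
  | refl => exact .refl
  | @tail x _ _ hstep ih =>
    obtain ⟨⟨t, ht, rfl⟩, hlt⟩ := hstep
    refine ih.tail ⟨⟨x * t * x⁻¹, ht.conj x, ?_⟩, by rwa [length_inv, length_inv]⟩
    simp [mul_assoc, ht.inv]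

theorem lowerRight (h : cs.BruhatLE u v) (i : B) :
    cs.BruhatLE (cs.lowerRight i u) (cs.lowerRight i v) := by
  induction h with
  | refl => exact .refl
  | tail _ hstep ih =>
    obtain ⟨⟨t, ht, rfl⟩, hlt⟩ := hstep
    exact ih.trans (lowerRight_bruhatLE_lowerRight_mul ht hlt)

end BruhatLE

end BruhatLE

/-! ### Absolute length -/

lemma exists_reflection_factorization (w : W) :
    ∃ l : List W, l.length = cs.absLength w ∧ (∀ t ∈ l, cs.IsReflection t) ∧ l.prod = w := by
  have hne : {n : ℕ | ∃ l : List W,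
      l.length = n ∧ (∀ t ∈ l, cs.IsReflection t) ∧ l.prod = w}.Nonempty := by
    obtain ⟨ω, rfl⟩ := cs.wordProd_surjective w
    exact ⟨_, ω.map s, rfl,
      List.forall_mem_map.mpr fun i _ => cs.isReflection_simple i, rfl⟩
  exact Nat.sInf_mem hne

lemma absLength_prod_le {l : List W} (hl : ∀ t ∈ l, cs.IsReflection t) :
    cs.absLength l.prod ≤ l.length :=
  Nat.sInf_le ⟨l, rfl, hl, rfl⟩

lemma absLength_one : cs.absLength 1 = 0 :=
  Nat.le_zero.mp (cs.absLength_prod_le (l := []) (by simp))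

lemma absLength_mul_reflection_le {t : W} (ht : cs.IsReflection t) (w : W) :
    cs.absLength (w * t) ≤ cs.absLength w + 1 := by
  obtain ⟨l, hlen, hl, rfl⟩ := cs.exists_reflection_factorization w
  have hle := cs.absLength_prod_le (l := l ++ [t])
    (List.forall_mem_append.mpr ⟨hl, List.forall_mem_singleton.mpr ht⟩)
  rwa [List.prod_append, List.prod_singleton, List.length_append, List.length_singleton,
    hlen] at hle

lemma absLength_conj_le (u w : W) : cs.absLength (u * w * u⁻¹) ≤ cs.absLength w := by
  obtain ⟨l, hlen, hl, rfl⟩ := cs.exists_reflection_factorization w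
  have hle := cs.absLength_prod_le (l := l.map (MulAut.conj u))
    (List.forall_mem_map.mpr fun t ht => (hl t ht).conj u)
  rwa [← map_list_prod, MulAut.conj_apply, List.length_map, hlen] at hle

lemma absLength_conj (u w : W) : cs.absLength (u * w * u⁻¹) = cs.absLength w := by
  refine le_antisymm (cs.absLength_conj_le u w) ?_
  simpa [mul_assoc] using cs.absLength_conj_le u⁻¹ (u * w * u⁻¹)

/-! ### The moved space -/

/-- The moved space `(1 - w) V` of `w` in the geometric representation `V`. -/
def movedSpace (w : W) : Submodule ℝ (B →₀ ℝ) :=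
  LinearMap.range (LinearMap.id - (cs.geomRep w).toLinearMap)

lemma mem_movedSpace {w : W} {y : B →₀ ℝ} :
    y ∈ cs.movedSpace w ↔ ∃ x, x - cs.geomRep w x = y := by
  simp [movedSpace]

lemma movedSpace_one : cs.movedSpace 1 = ⊥ := by
  refine (Submodule.eq_bot_iff _).mpr fun y hy => ?_
  obtain ⟨x, rfl⟩ := cs.mem_movedSpace.mp hy
  rw [map_one, LinearEquiv.coe_one, id, sub_self]

lemma movedSpace_mul_le (u v : W) : cs.movedSpace (u * v) ≤ cs.movedSpace u ⊔ cs.movedSpace v := by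
  intro y hy
  obtain ⟨x, rfl⟩ := cs.mem_movedSpace.mp hy
  rw [geomRep_mul_apply, ← sub_add_sub_cancel' (cs.geomRep v x)]
  exact Submodule.add_mem_sup (cs.mem_movedSpace.mpr ⟨_, rfl⟩) (cs.mem_movedSpace.mpr ⟨_, rfl⟩)

lemma movedSpace_conj_simple_le (u : W) (i : B) :
    cs.movedSpace (u * s i * u⁻¹) ≤ Submodule.span ℝ {cs.geomRep u (simpleRoot i)} := by
  intro y hy
  obtain ⟨x, rfl⟩ := cs.mem_movedSpace.mp hy
  rw [geomRep_conj_simple_apply, sub_sub_cancel]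
  exact Submodule.smul_mem _ _ (Submodule.mem_span_singleton_self _)

instance finiteDimensional_movedSpace (w : W) : FiniteDimensional ℝ (cs.movedSpace w) := by
  induction w using cs.simple_induction with
  | simple i =>
    refine Submodule.finiteDimensional_of_le (S₂ := Submodule.span ℝ {simpleRoot i}) ?_
    simpa using cs.movedSpace_conj_simple_le 1 i
  | one =>
    rw [movedSpace_one]
    infer_instance
  | mul u v _ _ => exact Submodule.finiteDimensional_of_le (cs.movedSpace_mul_le u v)

lemma finrank_movedSpace_mul_le (u v : W) :
    Module.finrank ℝ (cs.movedSpace (u * v)) ≤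
      Module.finrank ℝ (cs.movedSpace u) + Module.finrank ℝ (cs.movedSpace v) :=
  (Submodule.finrank_mono (cs.movedSpace_mul_le u v)).trans
    (Submodule.finrank_add_le_finrank_add_finrank _ _)

lemma finrank_movedSpace_reflection_le {t : W} (ht : cs.IsReflection t) :
    Module.finrank ℝ (cs.movedSpace t) ≤ 1 := by
  obtain ⟨u, i, rfl⟩ := ht
  refine (Submodule.finrank_mono (cs.movedSpace_conj_simple_le u i)).trans ?_
  simpa using finrank_span_le_card (R := ℝ) {cs.geomRep u (simpleRoot i)}

theorem finrank_movedSpace_le_absLength (w : W) :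
    Module.finrank ℝ (cs.movedSpace w) ≤ cs.absLength w := by
  obtain ⟨l, hlen, hl, rfl⟩ := cs.exists_reflection_factorization w
  rw [← hlen]
  clear hlen
  induction l with
  | nil => rw [List.prod_nil, movedSpace_one, finrank_bot, List.length_nil]
  | cons t l ih =>
    rw [List.prod_cons, List.length_cons, add_comm]
    rw [List.forall_mem_cons] at hl
    exact (cs.finrank_movedSpace_mul_le t l.prod).trans
      (add_le_add (cs.finrank_movedSpace_reflection_le hl.1) (ih hl.2))

lemma movedSpace_conj (u w : W) :
    cs.movedSpace (u * w * u⁻¹) = (cs.movedSpace w).map (cs.geomRep u).toLinearMap := by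
  ext y
  simp only [Submodule.mem_map, mem_movedSpace, exists_exists_eq_and]
  rw [(cs.geomRep u).surjective.exists]
  simp only [LinearEquiv.coe_coe, map_sub, ← geomRep_mul_apply, inv_mul_cancel_right]

lemma finrank_movedSpace_conj (u w : W) :
    Module.finrank ℝ (cs.movedSpace (u * w * u⁻¹)) = Module.finrank ℝ (cs.movedSpace w) := by
  rw [movedSpace_conj]
  exact LinearEquiv.finrank_map_eq _ _

lemma geomRep_simpleRoot_eq_self {w : W} {i : B} (hcomm : Commute (s i) w)
    (hi : ¬ cs.IsRightDescent w i) : cs.geomRep w (simpleRoot i) = simpleRoot i := by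
  have hroot : cs.IsPosRootOf (s i) (cs.geomRep w (simpleRoot i)) :=
    ⟨w, i, by rw [← hcomm.eq, mul_inv_cancel_right], rfl, cs.geomRep_simpleRoot_nonneg hi⟩
  exact hroot.root_eq (isPosRootOf_simple i)

lemma movedSpace_lt_movedSpace_mul_simple {w : W} (hw : w * w = 1) {i : B}
    (hfix : cs.geomRep w (simpleRoot i) = simpleRoot i) :
    cs.movedSpace w < cs.movedSpace (w * s i) := by
  have hmem : simpleRoot i ∈ cs.movedSpace (w * s i) := by
    refine cs.mem_movedSpace.mpr ⟨(1 / 2 : ℝ) • simpleRoot i, ?_⟩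
    rw [geomRep_mul_apply, map_smul, geomRep_simple_simpleRoot, map_smul, map_neg, hfix]
    module
  have hnot_mem : simpleRoot i ∉ cs.movedSpace w := by
    intro h
    obtain ⟨x, hx⟩ := cs.mem_movedSpace.mp h
    have hneg : cs.geomRep w (simpleRoot i) = -simpleRoot i := by
      rw [← hx, map_sub, ← geomRep_mul_apply, hw, map_one, LinearEquiv.coe_one, id, neg_sub]
    exact Finsupp.single_ne_zero.mpr one_ne_zero (self_eq_neg.mp (hfix.symm.trans hneg))
  refine SetLike.lt_iff_le_and_exists.mpr ⟨fun y hy => ?_, _, hmem, hnot_mem⟩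
  obtain ⟨x, rfl⟩ := cs.mem_movedSpace.mp hy
  have hdecomp : x - cs.geomRep w x =
      (x - cs.geomRep (w * s i) x) - rootForm M (simpleRoot i) x • simpleRoot i := by
    rw [geomRep_mul_apply, geomRep_simple_apply, map_sub, map_smul, hfix]
    abel
  rw [hdecomp]
  exact Submodule.sub_mem _ (cs.mem_movedSpace.mpr ⟨x, rfl⟩) (Submodule.smul_mem _ _ hmem)

lemma finrank_movedSpace_lt_of_commute {w : W} (hw : w * w = 1) {i : B}
    (hcomm : Commute (s i) w) (hi : ¬ cs.IsRightDescent w i) :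
    Module.finrank ℝ (cs.movedSpace w) < Module.finrank ℝ (cs.movedSpace (w * s i)) :=
  Submodule.finrank_lt_finrank_of_lt
    (cs.movedSpace_lt_movedSpace_mul_simple hw (cs.geomRep_simpleRoot_eq_self hcomm hi))

/-! ### Twisting involutions -/

open Classical in
/-- The operation of a simple reflection on the involutions of `W`, due to Richardson and Springer:
conjugation by `sᵢ`, replaced by multiplication by `sᵢ` where conjugation is trivial. -/
def twist (i : B) (w : W) : W := if Commute (s i) w then w * s i else s i * w * s i

section twist

variable {cs} {i : B} {w : W}

lemma twist_of_commute (h : Commute (s i) w) : cs.twist i w = w * s i :=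
  if_pos h

lemma twist_of_not_commute (h : ¬ Commute (s i) w) : cs.twist i w = s i * w * s i :=
  if_neg h

lemma twist_twist (i : B) (w : W) : cs.twist i (cs.twist i w) = w := by
  by_cases h : Commute (s i) w
  · rw [twist_of_commute h, twist_of_commute (h.mul_right (Commute.refl _)),
      simple_mul_simple_cancel_right]
  · have h' : ¬ Commute (s i) (s i * w * s i) := by
      intro hc
      apply h
      simpa [mul_assoc] using ((Commute.refl (s i)).mul_right hc).mul_right (Commute.refl _)
    rw [twist_of_not_commute h, twist_of_not_commute h']
    simp [mul_assoc]

variable (cs) in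
lemma twist_mul_self (i : B) (hw : w * w = 1) : cs.twist i w * cs.twist i w = 1 := by
  by_cases h : Commute (s i) w
  · rw [twist_of_commute h, h.mul_mul_mul_comm, hw, simple_mul_simple_self, one_mul]
  · rw [twist_of_not_commute h]
    calc s i * w * s i * (s i * w * s i) = s i * (w * w) * s i := by simp [mul_assoc]
      _ = 1 := by rw [hw, mul_one, simple_mul_simple_self]

lemma length_mul_simple_lt_of_not_commute (h : ¬ Commute (s i) w) (hlt : ℓ w < ℓ (s i * w)) :
    ℓ (w * s i) < ℓ (s i * w * s i) := by
  have hmul : w * (w⁻¹ * s i * w) = s i * w := by group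
  have hrefl : cs.IsReflection (w⁻¹ * s i * w) := by
    simpa using (cs.isReflection_simple i).conj w⁻¹
  have hne : w⁻¹ * s i * w ≠ s i := by
    intro heq
    rw [heq] at hmul
    exact h hmul.symm
  rw [← hmul] at hlt ⊢
  exact length_mul_simple_lt_of_ne hrefl hne hlt

variable (cs) in
lemma length_simple_mul_of_mul_self (i : B) (hw : w * w = 1) : ℓ (s i * w) = ℓ (w * s i) := by
  rw [← length_inv, mul_inv_rev, inv_simple, ← mul_eq_one_iff_eq_inv.mp hw]

lemma isRightDescent_simple_mul_iff (hw : w * w = 1) (h : ¬ Commute (s i) w) :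
    cs.IsRightDescent (s i * w) i ↔ cs.IsRightDescent w i := by
  have hlen := cs.length_simple_mul_of_mul_self i hw
  refine ⟨fun hdesc => by_contra fun hi => ?_, fun hi => ?_⟩
  · have hlt : ℓ w < ℓ (s i * w) := by
      rw [hlen, cs.not_isRightDescent_iff.mp hi]
      exact Nat.lt_succ_self _
    have hlt' := length_mul_simple_lt_of_not_commute h hlt
    rw [← hlen] at hlt'
    exact hdesc.asymm hlt'
  · have h' : ¬ Commute (s i) (s i * w) := by
      intro hc
      apply h
      simpa using (Commute.refl (s i)).mul_right hc
    have hlt : ℓ (s i * w) < ℓ (s i * (s i * w)) := by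
      rw [simple_mul_simple_cancel_left, hlen]
      exact hi
    have hlt' := length_mul_simple_lt_of_not_commute h' hlt
    rwa [simple_mul_simple_cancel_left, ← hlen] at hlt'

lemma isRightDescent_twist_iff (hw : w * w = 1) :
    cs.IsRightDescent (cs.twist i w) i ↔ ¬ cs.IsRightDescent w i := by
  by_cases h : Commute (s i) w
  · rw [twist_of_commute h, isRightDescent_iff_not_isRightDescent_mul,
      simple_mul_simple_cancel_right]
  · rw [twist_of_not_commute h, isRightDescent_iff_not_isRightDescent_mul,
      simple_mul_simple_cancel_right, isRightDescent_simple_mul_iff hw h]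

lemma length_conj_simple_of_not_commute (hw : w * w = 1) (h : ¬ Commute (s i) w)
    (hi : ¬ cs.IsRightDescent w i) : ℓ (s i * w * s i) = ℓ w + 2 := by
  rw [cs.not_isRightDescent_iff.mp ((isRightDescent_simple_mul_iff hw h).not.mpr hi),
    cs.length_simple_mul_of_mul_self i hw, cs.not_isRightDescent_iff.mp hi]

lemma length_lt_length_twist (hw : w * w = 1) (hi : ¬ cs.IsRightDescent w i) :
    ℓ w < ℓ (cs.twist i w) := by
  by_cases h : Commute (s i) w
  · rw [twist_of_commute h, cs.not_isRightDescent_iff.mp hi]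
    exact Nat.lt_succ_self _
  · rw [twist_of_not_commute h, length_conj_simple_of_not_commute hw h hi]
    omega

lemma lowerRight_inv_lowerRight (hw : w * w = 1) (hi : cs.IsRightDescent w i) :
    cs.lowerRight i (cs.lowerRight i w)⁻¹ = cs.twist i w := by
  rw [lowerRight_of_isRightDescent _ hi, mul_inv_rev, inv_simple, ← mul_eq_one_iff_eq_inv.mp hw]
  by_cases h : Commute (s i) w
  · rw [twist_of_commute h, h.eq, lowerRight_of_not_isRightDescent _
      (cs.isRightDescent_iff_not_isRightDescent_mul.mp hi)]
  · rw [twist_of_not_commute h, lowerRight_of_isRightDescent _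
      ((isRightDescent_simple_mul_iff hw h).mpr hi)]

namespace BruhatLE

variable {v : W}

theorem twist (h : cs.BruhatLE w v) (hw : w * w = 1) (hv : v * v = 1)
    (hwi : cs.IsRightDescent w i) (hvi : cs.IsRightDescent v i) :
    cs.BruhatLE (cs.twist i w) (cs.twist i v) := by
  rw [← lowerRight_inv_lowerRight hw hwi, ← lowerRight_inv_lowerRight hv hvi]
  exact (h.lowerRight i).inv.lowerRight i

theorem le_twist (h : cs.BruhatLE w v) (hw : w * w = 1) (hv : v * v = 1)
    (hwi : ¬ cs.IsRightDescent w i) (hvi : cs.IsRightDescent v i) :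
    cs.BruhatLE w (cs.twist i v) := by
  have hle := (h.lowerRight i).inv.lowerRight i
  rwa [lowerRight_inv_lowerRight hv hvi, lowerRight_of_not_isRightDescent _ hwi,
    ← mul_eq_one_iff_eq_inv.mp hw, lowerRight_of_not_isRightDescent _ hwi] at hle

end BruhatLE

end twist

@[elab_as_elim]
theorem involution_induction {P : ∀ w : W, w * w = 1 → Prop} (one : P 1 (mul_one 1))
    (twist : ∀ x i (hx : x * x = 1), ¬ cs.IsRightDescent x i → P x hx →
      P (cs.twist i x) (cs.twist_mul_self i hx))
    (w : W) (hw : w * w = 1) : P w hw := by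
  induction hn : ℓ w using Nat.strong_induction_on generalizing w with
  | _ n ih =>
  subst hn
  by_cases hw1 : w = 1
  · subst hw1
    exact one
  obtain ⟨i, hi⟩ := cs.exists_rightDescent_of_ne_one hw1
  have hx := cs.twist_mul_self i hw
  have hxi : ¬ cs.IsRightDescent (cs.twist i w) i :=
    fun h => (isRightDescent_twist_iff hw).mp h hi
  have hlt := length_lt_length_twist hx hxi
  rw [twist_twist] at hlt
  simpa only [twist_twist] using twist _ i hx hxi (ih _ hlt _ hx rfl)

theorem absLength_eq_finrank_movedSpace {w : W} (hw : w * w = 1) :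
    cs.absLength w = Module.finrank ℝ (cs.movedSpace w) := by
  induction w, hw using cs.involution_induction with
  | one => rw [absLength_one, movedSpace_one, finrank_bot]
  | twist x i hx hi ih =>
    by_cases h : Commute (s i) x
    · rw [twist_of_commute h]
      have hle := cs.absLength_mul_reflection_le (cs.isReflection_simple i) x
      have hlt := cs.finrank_movedSpace_lt_of_commute hx h hi
      have hge := cs.finrank_movedSpace_le_absLength (x * s i)
      omega
    · have habs := cs.absLength_conj (s i) x
      have hdim := cs.finrank_movedSpace_conj (s i) x
      rw [inv_simple] at habs hdim
      rw [twist_of_not_commute h, habs, hdim, ih]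

theorem length_add_absLength_twist {w : W} (hw : w * w = 1) {i : B}
    (hi : ¬ cs.IsRightDescent w i) :
    ℓ (cs.twist i w) + cs.absLength (cs.twist i w) = ℓ w + cs.absLength w + 2 := by
  by_cases h : Commute (s i) w
  · have hlt := cs.finrank_movedSpace_lt_of_commute hw h hi
    have hle := cs.absLength_mul_reflection_le (cs.isReflection_simple i) w
    have hws := cs.twist_mul_self i hw
    rw [twist_of_commute h] at hws ⊢
    rw [← cs.absLength_eq_finrank_movedSpace hw, ← cs.absLength_eq_finrank_movedSpace hws] at hlt
    rw [cs.not_isRightDescent_iff.mp hi]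
    omega
  · have habs := cs.absLength_conj (s i) w
    rw [inv_simple] at habs
    rw [twist_of_not_commute h, habs, length_conj_simple_of_not_commute hw h hi]
    omega

theorem length_add_absLength_lt {w σ : W} (hw : w * w = 1) (hσ : σ * σ = 1)
    (hle : cs.BruhatLE w σ) (hne : w ≠ σ) :
    ℓ w + cs.absLength w < ℓ σ + cs.absLength σ := by
  induction σ, hσ using cs.involution_induction generalizing w with
  | one => exact absurd hle.eq_one hne
  | twist τ i hτ hτi ih =>
    have hσ := cs.twist_mul_self i hτ
    have hσi : cs.IsRightDescent (cs.twist i τ) i := (isRightDescent_twist_iff hτ).mpr hτi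
    rw [length_add_absLength_twist _ hτ hτi]
    by_cases hwi : cs.IsRightDescent w i
    · have hx := cs.twist_mul_self i hw
      have hxi : ¬ cs.IsRightDescent (cs.twist i w) i :=
        fun h => (isRightDescent_twist_iff hw).mp h hwi
      have hxτ := hle.twist hw hσ hwi hσi
      rw [twist_twist] at hxτ
      have hlt := ih hx hxτ fun h => hne (by rw [← h, twist_twist])
      have hrank := cs.length_add_absLength_twist hx hxi
      rw [twist_twist] at hrank
      omega
    · have hwτ := hle.le_twist hw hσ hwi hσi
      rw [twist_twist] at hwτ
      rcases eq_or_ne w τ with rfl | hne'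
      · omega
      · have hlt := ih hw hwτ hne'
        omega

/-- If `w` and `σ` are involutions in a Coxeter group with `w ≤ σ` in the Bruhat order and
`ℓ(w) + ℓᵃ(w) = ℓ(σ) + ℓᵃ(σ)`, then `w = σ`. -/
theorem bruhatLE_involutions_eq_of_length_add_absLength_eq
    (w σ : W) (hw : w * w = 1) (hσ : σ * σ = 1)
    (hle : cs.BruhatLE w σ)
    (hsum : cs.length w + cs.absLength w = cs.length σ + cs.absLength σ) :
    w = σ := by
  by_contra hne
  exact (cs.length_add_absLength_lt hw hσ hle hne).ne hsum

end CoxeterSystem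

end
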